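/- arXiv:math/0703626 — 2 statements merged into one kernel-verified Lean document; each statement's English description precedes it below -/
import Mathlib

section
/- Let $X, Y$ be Banach spaces, $\Omega$ a compact Hausdorff space, and $U : C(\Omega, X) \to Y$ a Dunford–Pettis bounded linear operator. Define $U_\# : X \to L(C(\Omega), Y)$ by $(U_\# x)(\varphi) = U(\varphi \otimes x)$, where $(\varphi \otimes x)(\omega) = \varphi(\omega)x$. Then $U_\#$ is itself a Dunford–Pettis operator: for every weakly null sequence $(x_n)$ in $X$, $\|U_\#(x_n)\|_{L(C(\Omega),Y)} \to 0$. -/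
open Filter Topology

/-- The elementary tensor `φ ⊗ x` in `C(Ω, X)`, `(φ ⊗ x)(ω) = φ(ω) • x`. -/
def tensor {Ω X : Type*} [TopologicalSpace Ω] [NormedAddCommGroup X] [NormedSpace ℝ X]
    (φ : C(Ω, ℝ)) (x : X) : C(Ω, X) :=
  ⟨fun ω => φ ω • x, (map_continuous φ).smul continuous_const⟩

open scoped NNReal CompactlySupported in
/-- A bounded functional on `C(K)` is dominated by a positive one. -/
theorem exists_dominating {K : Type*} [TopologicalSpace K] [CompactSpace K]
    (Ψ : C(K, ℝ) →L[ℝ] ℝ) :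
    ∃ Λ : C_c(K, ℝ≥0) →ₗ[ℝ≥0] ℝ≥0, ∀ (g : C(K, ℝ)) (h : C_c(K, ℝ≥0)),
      (∀ k, |g k| ≤ h k) → |Ψ g| ≤ Λ h := by
  have key : ∀ h : C_c(K, ℝ≥0), ∃ L : ℝ, IsLUB (Ψ '' {g | ∀ k, |g k| ≤ h k}) L := by
    intro h
    refine ⟨_, isLUB_csSup ⟨Ψ 0, 0, by simp, rfl⟩ ?_⟩
    let h' : C(K, ℝ) := ⟨fun k => (h k : ℝ), by fun_prop⟩
    refine ⟨‖Ψ‖ * ‖h'‖, ?_⟩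
    rintro _ ⟨g, hg, rfl⟩
    refine (le_abs_self _).trans ((Ψ.le_opNorm g).trans ?_)
    gcongr
    rw [ContinuousMap.norm_le _ (norm_nonneg _)]
    intro k
    refine (hg k).trans ?_
    exact (le_abs_self _).trans (h'.norm_coe_le_norm k)
  choose L hL using key
  have le : ∀ h (g : C(K, ℝ)), (∀ k, |g k| ≤ h k) → Ψ g ≤ L h :=
    fun h g hg => (hL h).1 ⟨g, hg, rfl⟩
  have ub : ∀ h c, (∀ g : C(K, ℝ), (∀ k, |g k| ≤ h k) → Ψ g ≤ c) → L h ≤ c := by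
    intro h c H
    refine (hL h).2 ?_
    rintro _ ⟨g, hg, rfl⟩
    exact H g hg
  have nonneg : ∀ h, 0 ≤ L h := fun h => by simpa using le h 0 (by simp)
  have hadd : ∀ h₁ h₂, L (h₁ + h₂) = L h₁ + L h₂ := by
    intro h₁ h₂
    apply le_antisymm
    · apply ub
      intro g hg
      let g₁ : C(K, ℝ) := ⟨fun k => max (-(h₁ k : ℝ)) (min (g k) (h₁ k)), by fun_prop⟩
      have h1 : ∀ k, |g₁ k| ≤ h₁ k := by
        intro k
        have := (h₁ k).2
        simp only [g₁, ContinuousMap.coe_mk]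
        rw [abs_le]
        refine ⟨le_max_left _ _, max_le ?_ (min_le_right _ _)⟩
        have : (0 : ℝ) ≤ h₁ k := this
        linarith
      have h2 : ∀ k, |(g - g₁) k| ≤ h₂ k := by
        intro k
        have a1 : (0 : ℝ) ≤ h₁ k := (h₁ k).2
        have a2 : (0 : ℝ) ≤ h₂ k := (h₂ k).2
        have a3 := hg k
        simp only [CompactlySupportedContinuousMap.coe_add, Pi.add_apply, NNReal.coe_add] at a3
        simp only [g₁, ContinuousMap.coe_mk, ContinuousMap.sub_apply]
        rw [abs_le] at a3 ⊢
        rcases max_cases (-(h₁ k : ℝ)) (min (g k) (h₁ k)) with h | h <;>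
        rcases min_cases (g k) (h₁ k : ℝ) with h' | h' <;>
        constructor <;> linarith
      have := le _ _ h1
      have := le _ _ h2
      rw [map_sub] at this
      linarith
    · have : L h₁ ≤ L (h₁ + h₂) - L h₂ := by
        apply ub
        intro g₁ hg₁
        have : L h₂ ≤ L (h₁ + h₂) - Ψ g₁ := by
          apply ub
          intro g₂ hg₂
          have := le (h₁ + h₂) (g₁ + g₂) (fun k => by
            simp only [CompactlySupportedContinuousMap.coe_add, Pi.add_apply, NNReal.coe_add,
              ContinuousMap.add_apply]
            exact (abs_add_le _ _).trans (add_le_add (hg₁ k) (hg₂ k)))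
          rw [map_add] at this
          linarith
        linarith
      linarith
  have hsm' : ∀ (c : ℝ≥0) h, 0 < c → c * L h ≤ L (c • h) := by
    intro c h hc
    have hc' : (0 : ℝ) < c := hc
    rw [← le_div_iff₀' hc']
    apply ub
    intro g hg
    rw [le_div_iff₀' hc']
    have := le (c • h) ((c : ℝ) • g) (fun k => by
      simp only [ContinuousMap.smul_apply, CompactlySupportedContinuousMap.smul_apply, smul_eq_mul,
        NNReal.coe_mul, abs_mul, NNReal.abs_eq]
      exact mul_le_mul_of_nonneg_left (hg k) hc'.le)
    simpa using this
  have hsm : ∀ (c : ℝ≥0) h, L (c • h) = c * L h := by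
    intro c h
    rcases eq_or_ne c 0 with rfl | hc
    · have := hadd 0 0
      simp only [add_zero] at this
      simp
      linarith
    · have hc0 : 0 < c := pos_iff_ne_zero.2 hc
      apply le_antisymm _ (hsm' c h hc0)
      have := hsm' c⁻¹ (c • h) (inv_pos.2 hc0)
      rw [smul_smul, inv_mul_cancel₀ hc, one_smul] at this
      have hc' : (0 : ℝ) < c := hc0
      rw [NNReal.coe_inv, inv_mul_le_iff₀ hc'] at this
      exact this
  refine ⟨{ toFun := fun h => ⟨L h, nonneg h⟩
            map_add' := fun a b => NNReal.eq (hadd a b)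
            map_smul' := fun c a => NNReal.eq (hsm c a) }, ?_⟩
  intro g h hg
  change |Ψ g| ≤ L h
  rw [abs_le]
  refine ⟨?_, le _ _ hg⟩
  have := le h (-g) (by simpa using hg)
  rw [map_neg] at this
  linarith

open scoped NNReal CompactlySupported ENNReal in
/-- Bounded pointwise null sequences in `C(K)` are weakly null. -/
theorem weakly_null_of_pointwise {K : Type*} [TopologicalSpace K] [CompactSpace K] [T2Space K]
    (Ψ : C(K, ℝ) →L[ℝ] ℝ) (g : ℕ → C(K, ℝ)) (C : ℝ≥0) (hC : ∀ n k, |g n k| ≤ C)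
    (h0 : ∀ k, Tendsto (fun n => g n k) atTop (𝓝 0)) :
    Tendsto (fun n => Ψ (g n)) atTop (𝓝 0) := by
  let _ : MeasurableSpace K := borel K
  have : BorelSpace K := ⟨rfl⟩
  obtain ⟨Λ, hΛ⟩ := exists_dominating Ψ
  let a : ℕ → C_c(K, ℝ≥0) := fun n =>
    CompactlySupportedContinuousMap.continuousMapEquiv ⟨fun k => ‖g n k‖₊, by fun_prop⟩
  let b : C_c(K, ℝ≥0) :=
    CompactlySupportedContinuousMap.continuousMapEquiv ⟨fun _ => C, by fun_prop⟩
  have ha : ∀ n k, a n k = ‖g n k‖₊ := fun n k => rfl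
  have hb : ∀ k, b k = C := fun k => rfl
  have hlim : Tendsto (fun n => ∫⁻ k, (a n k : ℝ≥0∞) ∂(NNRealRMK.rieszMeasure Λ)) atTop
      (𝓝 (∫⁻ _, 0 ∂(NNRealRMK.rieszMeasure Λ))) := by
    apply MeasureTheory.tendsto_lintegral_of_dominated_convergence (fun k => (b k : ℝ≥0∞))
    · intro n
      exact ((map_continuous (a n)).measurable).coe_nnreal_ennreal
    · intro n
      refine Eventually.of_forall fun k => ?_
      simp only [ha, hb]
      exact ENNReal.coe_le_coe.2 (hC n k)
    · rw [NNRealRMK.lintegral_rieszMeasure]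
      exact ENNReal.coe_ne_top
    · refine Eventually.of_forall fun k => ?_
      simp only [ha]
      have := (h0 k).nnnorm
      rw [nnnorm_zero] at this
      exact ENNReal.tendsto_coe.2 this
  simp only [NNRealRMK.lintegral_rieszMeasure, MeasureTheory.lintegral_zero] at hlim
  have hlim' : Tendsto (fun n => ((Λ (a n) : ℝ≥0) : ℝ)) atTop (𝓝 0) := by
    have : Tendsto (fun n => Λ (a n)) atTop (𝓝 0) := ENNReal.tendsto_coe.1 hlim
    exact NNReal.tendsto_coe.2 this
  exact squeeze_zero_norm (fun n => hΛ (g n) (a n) (fun k => le_of_eq rfl)) hlim'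

/-- `φₙ ⊗ xₙ` is weakly null when `xₙ` is weakly null and `φₙ` lies in the unit ball. -/
theorem tensor_weakly_null {Ω X : Type*} [TopologicalSpace Ω] [CompactSpace Ω] [T2Space Ω]
    [NormedAddCommGroup X] [NormedSpace ℝ X]
    (x : ℕ → X) (hx : ∀ φ : X →L[ℝ] ℝ, Tendsto (fun n => φ (x n)) atTop (𝓝 0))
    (φ : ℕ → C(Ω, ℝ)) (hφ : ∀ n, ‖φ n‖ ≤ 1) (Φ : C(Ω, X) →L[ℝ] ℝ) :
    Tendsto (fun n => Φ (tensor (φ n) (x n))) atTop (𝓝 0) := by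
  -- boundedness of the sequence
  obtain ⟨C, hC⟩ : ∃ C, ∀ n, ‖x n‖ ≤ C := by
    obtain ⟨C, hC⟩ := banach_steinhaus
      (g := fun n => NormedSpace.inclusionInDoubleDual ℝ X (x n)) (fun f => by
        obtain ⟨C, hC⟩ := (hx f).norm.bddAbove_range
        exact ⟨C, fun n => hC ⟨n, rfl⟩⟩)
    refine ⟨C, fun n => ?_⟩
    have h := (NormedSpace.inclusionInDoubleDualLi ℝ (E := X)).norm_map (x n)
    exact h.symm.le.trans (hC n)
  let B : Set (WeakDual ℝ X) := WeakDual.toStrongDual ⁻¹' Metric.closedBall 0 1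
  have : CompactSpace B := isCompact_iff_compactSpace.1 (WeakDual.isCompact_closedBall _ _)
  have hB : ∀ (b : B) (v : X), |(b : WeakDual ℝ X) v| ≤ ‖v‖ := by
    intro b v
    have h1 : ‖WeakDual.toStrongDual (b : WeakDual ℝ X)‖ ≤ 1 := mem_closedBall_zero_iff.1 b.2
    exact (ContinuousLinearMap.le_of_opNorm_le _ h1 v).trans (one_mul _).le
  have hcont : ∀ f : C(Ω, X), Continuous (fun p : Ω × B => (p.2 : WeakDual ℝ X) (f p.1)) := by
    intro f
    rw [continuous_iff_continuousAt]
    rintro ⟨ω₀, b₀⟩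
    have h1 : Tendsto (fun p : Ω × B => (p.2 : WeakDual ℝ X) (f ω₀)) (𝓝 (ω₀, b₀))
        (𝓝 ((b₀ : WeakDual ℝ X) (f ω₀))) :=
      (((WeakDual.eval_continuous (f ω₀)).comp
        (continuous_subtype_val.comp continuous_snd)).tendsto (ω₀, b₀))
    have h2 : Tendsto (fun p : Ω × B => (p.2 : WeakDual ℝ X) (f p.1 - f ω₀)) (𝓝 (ω₀, b₀))
        (𝓝 0) := by
      refine squeeze_zero_norm (fun p => hB p.2 _) ?_
      have : Continuous (fun p : Ω × B => ‖f p.1 - f ω₀‖) := by fun_prop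
      simpa using this.tendsto (ω₀, b₀)
    have := h1.add h2
    simpa [ContinuousAt] using this
  let J : C(Ω, X) →ₗᵢ[ℝ] C(Ω × B, ℝ) :=
    { toFun := fun f => ⟨_, hcont f⟩
      map_add' := fun f g => by ext p; simp
      map_smul' := fun c f => by ext p; simp
      norm_map' := fun f => by
        apply le_antisymm
        · rw [ContinuousMap.norm_le _ (norm_nonneg _)]
          intro p
          exact (hB p.2 _).trans (f.norm_coe_le_norm p.1)
        · rw [ContinuousMap.norm_le _ (norm_nonneg _)]
          intro ω
          obtain ⟨ξ, h1, h2⟩ := exists_dual_vector'' ℝ (f ω)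
          let b : B := ⟨StrongDual.toWeakDual ξ, by simpa [B] using h1⟩
          have h3 := ContinuousMap.norm_coe_le_norm
            (⟨_, hcont f⟩ : C(Ω × B, ℝ)) (ω, b)
          have h4 : (⟨_, hcont f⟩ : C(Ω × B, ℝ)) (ω, b) = ‖f ω‖ := h2
          rw [h4, norm_norm] at h3
          exact h3 }
  have hJ : ∀ f p, J f p = (p.2 : WeakDual ℝ X) (f p.1) := fun f p => rfl
  obtain ⟨Ψ, hΨ, -⟩ := exists_extension_norm_eq (𝕜 := ℝ) (LinearMap.range J.toLinearMap)
    (Φ.comp (J.equivRange.symm.toContinuousLinearEquiv : _ →L[ℝ] C(Ω, X)))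
  have hΨ' : ∀ f, Ψ (J f) = Φ f := by
    intro f
    have := hΨ (J.equivRange f)
    simpa using this
  simp only [← hΨ']
  have hval : ∀ n p, J (tensor (φ n) (x n)) p = φ n p.1 * (p.2 : WeakDual ℝ X) (x n) := by
    intro n p
    rw [hJ]
    simp [tensor]
  have hφ1 : ∀ n ω, |φ n ω| ≤ 1 := fun n ω => ((φ n).norm_coe_le_norm ω).trans (hφ n)
  refine weakly_null_of_pointwise Ψ _ C.toNNReal ?_ ?_
  · intro n p
    rw [hval, abs_mul]
    refine (mul_le_of_le_one_left (abs_nonneg _) (hφ1 n p.1)).trans ?_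
    exact (hB p.2 _).trans ((hC n).trans (Real.le_coe_toNNReal C))
  · intro p
    have h := (hx (WeakDual.toStrongDual (p.2 : WeakDual ℝ X))).norm
    rw [norm_zero] at h
    refine squeeze_zero_norm (fun n => ?_) h
    rw [hval, norm_mul]
    exact mul_le_of_le_one_left (norm_nonneg _) (hφ1 n p.1)

theorem stmt5 {Ω X Y : Type*} [TopologicalSpace Ω] [CompactSpace Ω] [T2Space Ω]
    [NormedAddCommGroup X] [NormedSpace ℝ X] [CompleteSpace X]
    [NormedAddCommGroup Y] [NormedSpace ℝ Y] [CompleteSpace Y]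
    (U : C(Ω, X) →L[ℝ] Y)
    (hDP : ∀ f : ℕ → C(Ω, X),
      (∀ Φ : C(Ω, X) →L[ℝ] ℝ, Tendsto (fun n => Φ (f n)) atTop (𝓝 0)) →
      Tendsto (fun n => ‖U (f n)‖) atTop (𝓝 0)) :
    ∀ x : ℕ → X, (∀ φ : X →L[ℝ] ℝ, Tendsto (fun n => φ (x n)) atTop (𝓝 0)) →
      ∀ ε > 0, ∃ N, ∀ n ≥ N, ∀ φ : C(Ω, ℝ), ‖φ‖ ≤ 1 →
        ‖U (tensor φ (x n))‖ ≤ ε := by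
  intro x hx ε hε
  by_contra! H
  classical
  let φ : ℕ → C(Ω, ℝ) := fun n =>
    if h : ∃ φ : C(Ω, ℝ), ‖φ‖ ≤ 1 ∧ ε < ‖U (tensor φ (x n))‖ then h.choose else 0
  have hφ : ∀ n, ‖φ n‖ ≤ 1 := by
    intro n
    by_cases h : ∃ φ : C(Ω, ℝ), ‖φ‖ ≤ 1 ∧ ε < ‖U (tensor φ (x n))‖
    · simp only [φ, dif_pos h]
      exact h.choose_spec.1
    · simp [φ, dif_neg h]
  have hlim := hDP _ (tensor_weakly_null x hx φ hφ)
  obtain ⟨N, hN⟩ := eventually_atTop.1 (hlim.eventually (gt_mem_nhds hε))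
  obtain ⟨n, hn, h⟩ := H N
  have h1 := hN n hn
  simp only [φ, dif_pos h] at h1
  exact lt_asymm h1 h.choose_spec.2
end

section
/- Let $1 \le p < 2$, let $r$ satisfy $1/p = 1/2 + 1/r$, let $(\alpha_n) \in \ell_p$, and define the vector measure $G : \Sigma \to \ell_p$ on the Borel sets of $[0,1]$ by $G(E) = (\alpha_n \int_E r_n(t)\,dt)_n$, where $(r_n)$ are the Rademacher functions. Then the semivariation satisfies $\frac{1}{\sqrt 2}\|(\alpha_n)\|_{\ell_r} \le \|G\|([0,1]) \le \|(\alpha_n)\|_{\ell_r}$, where $\|G\|([0,1]) = \sup_{\|y^*\|_{\ell_q}\le 1} \int_0^1 |\sum_n \xi_n \alpha_n r_n(t)|\,dt$ for $y^* = (\xi_n) \in \ell_q$, $q$ the conjugate of $p$. -/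
open Filter Topology
open scoped ENNReal

/-- The `k`-th Rademacher function, `r_k(t) = sign (sin (2^k π t))`. -/
noncomputable def rademacher (k : ℕ) (t : ℝ) : ℝ :=
  Real.sign (Real.sin (2 ^ k * Real.pi * t))


noncomputable def Ex {n : ℕ} (f : (Fin n → Bool) → ℝ) : ℝ := (∑ x, f x) / 2 ^ n

def flipAt {n : ℕ} (i : Fin n) (x : Fin n → Bool) : Fin n → Bool := Function.update x i (!x i)

def flipAll {n : ℕ} (x : Fin n → Bool) : Fin n → Bool := fun i => !x i

noncomputable def Dir {n : ℕ} (f : (Fin n → Bool) → ℝ) : ℝ :=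
  ∑ i, Ex (fun x => (f (flipAt i x) - f x) ^ 2) / 4

lemma Ex_succ {n : ℕ} (f : (Fin (n + 1) → Bool) → ℝ) :
    Ex f = (Ex (fun x => f (Fin.cons true x)) + Ex (fun x => f (Fin.cons false x))) / 2 := by
  have h : ∑ x, f x = ∑ x, f (Fin.cons true x) + ∑ x, f (Fin.cons false x) := by
    rw [← (Fin.consEquiv (fun _ : Fin (n + 1) => Bool)).sum_comp, Fintype.sum_prod_type]
    simp [Fin.consEquiv]
  unfold Ex
  rw [h, pow_succ]
  field_simp

lemma Ex_add {n : ℕ} (f g : (Fin n → Bool) → ℝ) : Ex (fun x => f x + g x) = Ex f + Ex g := by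
  unfold Ex; rw [Finset.sum_add_distrib]; ring

lemma Ex_sub {n : ℕ} (f g : (Fin n → Bool) → ℝ) : Ex (fun x => f x - g x) = Ex f - Ex g := by
  unfold Ex; rw [Finset.sum_sub_distrib]; ring

lemma Ex_smul {n : ℕ} (c : ℝ) (f : (Fin n → Bool) → ℝ) : Ex (fun x => c * f x) = c * Ex f := by
  unfold Ex; rw [← Finset.mul_sum]; ring

lemma Ex_const {n : ℕ} (c : ℝ) : Ex (fun _ : Fin n → Bool => c) = c := by
  unfold Ex; simp

lemma Ex_sum {n m : ℕ} (f : Fin m → (Fin n → Bool) → ℝ) :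
    Ex (fun x => ∑ i, f i x) = ∑ i, Ex (f i) := by
  unfold Ex; rw [Finset.sum_comm, Finset.sum_div]

lemma Ex_mono {n : ℕ} {f g : (Fin n → Bool) → ℝ} (h : ∀ x, f x ≤ g x) : Ex f ≤ Ex g := by
  unfold Ex
  have := Finset.sum_le_sum (fun x (_ : x ∈ Finset.univ) => h x)
  gcongr

lemma Ex_sq {n : ℕ} (f : (Fin n → Bool) → ℝ) : (Ex f) ^ 2 ≤ Ex (fun x => f x ^ 2) := by
  have h : 0 ≤ Ex (fun x => (f x - Ex f) ^ 2) := by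
    rw [← Ex_const (n := n) 0]; exact Ex_mono (fun x => sq_nonneg _)
  have e : (fun x => (f x - Ex f) ^ 2) =
      fun x => (f x ^ 2 - (2 * Ex f) * f x) + (Ex f) ^ 2 := by ext x; ring
  rw [e, Ex_add, Ex_sub, Ex_smul, Ex_const] at h
  nlinarith

lemma flipAt_inv {n : ℕ} (i : Fin n) : Function.Involutive (flipAt i) := by
  intro x; simp [flipAt]

lemma flipAll_inv {n : ℕ} : Function.Involutive (flipAll (n := n)) := by
  intro x; ext i; simp [flipAll]

lemma Ex_inv {n : ℕ} (e : (Fin n → Bool) → (Fin n → Bool)) (he : Function.Involutive e)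
    (f : (Fin n → Bool) → ℝ) : Ex (fun x => f (e x)) = Ex f := by
  unfold Ex
  rw [← Equiv.sum_comp (he.toPerm e) f]; rfl

lemma flipAt_zero_cons {n : ℕ} (b : Bool) (x : Fin n → Bool) :
    flipAt 0 (Fin.cons b x : Fin (n + 1) → Bool) = Fin.cons (!b) x := by
  simp [flipAt, Fin.update_cons_zero]

lemma flipAt_succ_cons {n : ℕ} (b : Bool) (i : Fin n) (x : Fin n → Bool) :
    flipAt i.succ (Fin.cons b x : Fin (n + 1) → Bool) = Fin.cons b (flipAt i x) := by
  simp [flipAt, Fin.cons_update]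

lemma flipAll_cons {n : ℕ} (b : Bool) (x : Fin n → Bool) :
    flipAll (Fin.cons b x : Fin (n + 1) → Bool) = Fin.cons (!b) (flipAll x) := by
  ext i; refine Fin.cases ?_ (fun j => ?_) i <;> simp [flipAll]

lemma Dir_succ {n : ℕ} (f : (Fin (n + 1) → Bool) → ℝ) :
    Dir f = (Dir (fun x => f (Fin.cons true x)) + Dir (fun x => f (Fin.cons false x))) / 2 +
      Ex (fun x => (f (Fin.cons true x) - f (Fin.cons false x)) ^ 2) / 4 := by
  unfold Dir
  rw [Fin.sum_univ_succ]
  simp only [Ex_succ (n := n), flipAt_zero_cons, flipAt_succ_cons, Bool.not_true, Bool.not_false]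
  have e : (fun x : Fin n → Bool => (f (Fin.cons false x) - f (Fin.cons true x)) ^ 2) =
    (fun x => (f (Fin.cons true x) - f (Fin.cons false x)) ^ 2) := by ext x; ring
  rw [e, ← Finset.sum_add_distrib, Finset.sum_div, add_comm]
  congr 1
  · refine Finset.sum_congr rfl (fun i _ => ?_); ring
  · ring

lemma poincare {n : ℕ} (f : (Fin n → Bool) → ℝ) :
    Ex (fun x => f x ^ 2) - (Ex f) ^ 2 ≤ Dir f := by
  induction n with
  | zero => simp [Dir, Ex]
  | succ n ih =>
    rw [Dir_succ, Ex_succ, Ex_succ f]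
    have h0 := ih (fun x => f (Fin.cons true x))
    have h1 := ih (fun x => f (Fin.cons false x))
    have h2 := Ex_sq (fun x => f (Fin.cons true x) - f (Fin.cons false x))
    rw [Ex_sub] at h2
    nlinarith

lemma Dir_par {n : ℕ} (u h : (Fin n → Bool) → ℝ) :
    Dir (fun x => u x + h x) + Dir (fun x => u x - h x) = 2 * (Dir u + Dir h) := by
  unfold Dir
  rw [← Finset.sum_add_distrib, ← Finset.sum_add_distrib, Finset.mul_sum]
  refine Finset.sum_congr rfl (fun i _ => ?_)
  rw [← add_div, ← add_div, ← Ex_add, ← Ex_add, mul_div_assoc', ← Ex_smul]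
  congr 2
  ext x; ring

lemma Ex_par {n : ℕ} (u h : (Fin n → Bool) → ℝ) :
    Ex (fun x => (u x + h x) ^ 2) + Ex (fun x => (u x - h x) ^ 2) =
      2 * (Ex (fun x => u x ^ 2) + Ex (fun x => h x ^ 2)) := by
  rw [← Ex_add, ← Ex_add, ← Ex_smul]
  congr 1
  ext x; ring

lemma poincare_odd {n : ℕ} (f : (Fin n → Bool) → ℝ) :
    2 * (Ex (fun x => f x ^ 2) - (Ex f) ^ 2) ≤
      Dir f + Ex (fun x => (f x - f (flipAll x)) ^ 2) / 4 := by
  induction n with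
  | zero =>
    have : ∀ x : Fin 0 → Bool, flipAll x = x := fun x => Subsingleton.elim _ _
    simp [Dir, Ex, this]
  | succ n ih =>
    obtain ⟨u, hu⟩ : ∃ u : (Fin n → Bool) → ℝ, u =
      fun x => (f (Fin.cons true x) + f (Fin.cons false x)) / 2 := ⟨_, rfl⟩
    obtain ⟨h, hh⟩ : ∃ h : (Fin n → Bool) → ℝ, h =
      fun x => (f (Fin.cons true x) - f (Fin.cons false x)) / 2 := ⟨_, rfl⟩
    have e0 : ∀ x, f (Fin.cons true x) = u x + h x := by intro x; rw [hu, hh]; ring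
    have e1 : ∀ x, f (Fin.cons false x) = u x - h x := by intro x; rw [hu, hh]; ring
    rw [Dir_succ]
    simp only [Ex_succ (n := n), flipAll_cons, Bool.not_true, Bool.not_false, e0, e1]
    have p1 := Ex_par u h
    have p2 := Dir_par u h
    have p3 := Ex_par (fun x => u x - u (flipAll x)) (fun x => h x + h (flipAll x))
    have a1 : (fun x => (u x + h x - (u (flipAll x) - h (flipAll x))) ^ 2) =
      (fun x => (u x - u (flipAll x) + (h x + h (flipAll x))) ^ 2) := by ext x; ring
    have a2 : (fun x => (u x - h x - (u (flipAll x) + h (flipAll x))) ^ 2) =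
      (fun x => (u x - u (flipAll x) - (h x + h (flipAll x))) ^ 2) := by ext x; ring
    have a3 : Ex (fun x => (u x + h x - (u x - h x)) ^ 2) = 4 * Ex (fun x => h x ^ 2) := by
      rw [← Ex_smul]; congr 1; ext x; ring
    rw [a1, a2, a3, Ex_add, Ex_sub]
    have i1 := ih u
    have i2 := poincare h
    have i3 := Ex_sq (fun x => h x + h (flipAll x))
    rw [Ex_add, Ex_inv flipAll flipAll_inv h] at i3
    nlinarith

lemma Dir_flipAll {n : ℕ} (f : (Fin n → Bool) → ℝ) : Dir (fun x => f (flipAll x)) = Dir f := by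
  unfold Dir
  refine Finset.sum_congr rfl (fun i _ => ?_)
  rw [← Ex_inv flipAll flipAll_inv (fun x => (f (flipAt i x) - f x) ^ 2)]
  congr 2
  ext x
  have : flipAll (flipAt i x) = flipAt i (flipAll x) := by
    ext j; by_cases hj : j = i
    · subst hj; simp [flipAll, flipAt]
    · simp [flipAll, flipAt, hj]
  simp only [this]

lemma poincare_even {n : ℕ} (f : (Fin (n + 1) → Bool) → ℝ) (hf : ∀ x, f (flipAll x) = f x) :
    2 * (Ex (fun x => f x ^ 2) - (Ex f) ^ 2) ≤ Dir f := by
  obtain ⟨g, hg⟩ : ∃ g : (Fin n → Bool) → ℝ, g = fun x => f (Fin.cons true x) := ⟨_, rfl⟩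
  have e0 : ∀ x, f (Fin.cons true x) = g x := by intro x; rw [hg]
  have e1 : ∀ x, f (Fin.cons false x) = g (flipAll x) := by
    intro x; rw [hg, ← hf, flipAll_cons]; rfl
  rw [Dir_succ, Ex_succ, Ex_succ]
  simp only [e0, e1]
  rw [Dir_flipAll, Ex_inv flipAll flipAll_inv (fun x => g x ^ 2), Ex_inv flipAll flipAll_inv g]
  have := poincare_odd g
  nlinarith

noncomputable def sg (b : Bool) : ℝ := if b then 1 else -1

lemma Dir_le {n : ℕ} (a : Fin n → ℝ) :
    Dir (fun x => |∑ i, a i * sg (x i)|) ≤ Ex (fun x => |∑ i, a i * sg (x i)| ^ 2) := by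
  obtain ⟨S, hS⟩ : ∃ S : (Fin n → Bool) → ℝ, S = fun x => ∑ i, a i * sg (x i) := ⟨_, rfl⟩
  have hSx : ∀ x, ∑ i, a i * sg (x i) = S x := by intro x; rw [hS]
  simp only [hSx]
  have h1 : ∀ i x, S (flipAt i x) = S x - 2 * (a i * sg (x i)) := by
    intro i x
    have : S (flipAt i x) - S x = - 2 * (a i * sg (x i)) := by
      rw [hS]; simp only
      rw [← Finset.sum_sub_distrib, Finset.sum_eq_single i]
      · simp only [flipAt, Function.update_self]
        cases x i <;> simp [sg] <;> ring
      · intro j _ hj; simp [flipAt, hj]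
      · simp
    linarith
  have h2 : ∀ x, ((n : ℝ) - 2) * |S x| ≤ ∑ i, |S (flipAt i x)| := by
    intro x
    have : ∑ i, S (flipAt i x) = (n - 2) * S x := by
      simp only [h1]
      rw [Finset.sum_sub_distrib, ← Finset.mul_sum, hSx]; simp; ring
    calc ((n : ℝ) - 2) * |S x| ≤ |(n : ℝ) - 2| * |S x| := by
          gcongr; exact le_abs_self _
      _ = |∑ i, S (flipAt i x)| := by rw [this, abs_mul]
      _ ≤ _ := Finset.abs_sum_le_sum_abs _ _
  have h3 : ∀ i, Ex (fun x => (|S (flipAt i x)| - |S x|) ^ 2) / 4 =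
      Ex (fun x => (|S x| ^ 2 - |S x| * |S (flipAt i x)|) / 2) := by
    intro i
    have e : Ex (fun x => |S (flipAt i x)| ^ 2) = Ex (fun x => |S x| ^ 2) :=
      Ex_inv (flipAt i) (flipAt_inv i) (fun x => |S x| ^ 2)
    have e1 : (fun x => (|S (flipAt i x)| - |S x|) ^ 2) =
      fun x => (|S (flipAt i x)| ^ 2 + |S x| ^ 2) - 2 * (|S x| * |S (flipAt i x)|) := by
      ext x; ring
    have e2 : (fun x => (|S x| ^ 2 - |S x| * |S (flipAt i x)|) / 2) =
      (fun x => (1 / 2) * (|S x| ^ 2 - |S x| * |S (flipAt i x)|)) := by ext x; ring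
    rw [e1, e2, Ex_sub, Ex_smul, Ex_add, Ex_smul, Ex_sub, e]
    ring
  unfold Dir
  simp only [h3]
  rw [← Ex_sum]
  refine Ex_mono (fun x => ?_)
  rw [← Finset.sum_div, Finset.sum_sub_distrib, ← Finset.mul_sum]
  have := h2 x
  simp only [Finset.sum_const, Finset.card_univ, Fintype.card_fin, nsmul_eq_mul]
  nlinarith [abs_nonneg (S x)]

lemma Ex_L2 {n : ℕ} (a : Fin n → ℝ) :
    Ex (fun x => |∑ i, a i * sg (x i)| ^ 2) = ∑ i, a i ^ 2 := by
  induction n with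
  | zero => simp [Ex]
  | succ n ih =>
    have := Ex_par (fun x => ∑ i : Fin n, a i.succ * sg (x i)) (fun _ => a 0)
    rw [Ex_succ, Fin.sum_univ_succ]
    have := ih (fun i => a i.succ)
    simp only [Fin.sum_univ_succ, Fin.cons_zero, Fin.cons_succ, sq_abs] at *
    simp only [sg, if_true, mul_one] at *
    simp only [Ex_const, add_comm (a 0)] at *
    simp only [Bool.false_eq_true, if_false, mul_neg, mul_one, neg_add_eq_sub] at *
    linarith

lemma szarek {n : ℕ} (a : Fin n → ℝ) :
    ∑ i, a i ^ 2 ≤ 2 * (Ex (fun x => |∑ i, a i * sg (x i)|)) ^ 2 := by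
  cases n with
  | zero => simp; positivity
  | succ n =>
    have h1 := poincare_even (fun x => |∑ i, a i * sg (x i)|) (by
      intro x
      have : ∑ i, a i * sg (flipAll x i) = - ∑ i, a i * sg (x i) := by
        rw [← Finset.sum_neg_distrib]
        refine Finset.sum_congr rfl (fun i _ => ?_)
        simp only [flipAll]; cases x i <;> simp [sg]
      simp only [this, abs_neg])
    have h2 := Dir_le a
    have h3 := Ex_L2 a
    linarith

lemma khin_upper {n : ℕ} (a : Fin n → ℝ) :
    (Ex (fun x => |∑ i, a i * sg (x i)|)) ^ 2 ≤ ∑ i, a i ^ 2 := by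
  rw [← Ex_L2]; exact Ex_sq _

lemma rad_double (k : ℕ) (t : ℝ) : rademacher (k + 1) t = rademacher k (2 * t) := by
  unfold rademacher; congr 2; ring

lemma rad_double' (k : ℕ) (t : ℝ) : rademacher (k + 2) t = rademacher (k + 1) (2 * t - 1) := by
  unfold rademacher; congr 1
  rw [← Real.sin_add_nat_mul_two_pi (2 ^ (k + 1) * Real.pi * (2 * t - 1)) (2 ^ k)]
  congr 1; push_cast; ring

lemma rad_one_left {t : ℝ} (h0 : 0 < t) (h1 : t < 1 / 2) : rademacher 1 t = 1 := by
  unfold rademacher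
  apply Real.sign_of_pos
  apply Real.sin_pos_of_pos_of_lt_pi
  · positivity
  · nlinarith [Real.pi_pos]

lemma rad_one_right {t : ℝ} (h0 : 1 / 2 < t) (h1 : t < 1) : rademacher 1 t = -1 := by
  unfold rademacher
  apply Real.sign_of_neg
  rw [← Real.sin_sub_two_pi]
  apply Real.sin_neg_of_neg_of_neg_pi_lt
  · nlinarith [Real.pi_pos]
  · nlinarith [Real.pi_pos]

open MeasureTheory in
lemma rad_integral {n : ℕ} (F : (Fin n → ℝ) → ℝ) :
    IntervalIntegrable (fun t => F (fun i => rademacher (i + 1) t)) volume 0 1 ∧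
    ∫ t in (0:ℝ)..1, F (fun i => rademacher (i + 1) t) = Ex (fun x => F (fun i => sg (x i))) := by
  induction n with
  | zero =>
    have : ∀ x : Fin 0 → ℝ, F x = F ![] := fun x => by congr 1; exact Subsingleton.elim _ _
    simp only [this, Ex_const]
    simp
  | succ n ih =>
    have hA := ih (fun y => F (Fin.cons 1 y))
    have hB := ih (fun y => F (Fin.cons (-1) y))
    set A : ℝ → ℝ := fun t => F (Fin.cons 1 (fun i : Fin n => rademacher (i + 1) t)) with hAd
    set B : ℝ → ℝ := fun t => F (Fin.cons (-1) (fun i : Fin n => rademacher (i + 1) t)) with hBd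
    have cA : Set.EqOn (fun t => A (2 * t)) (fun t => F (fun i : Fin (n+1) => rademacher (i + 1) t))
        (Set.Ioo 0 (1 / 2)) := by
      intro t ht
      simp only [hAd]
      congr 1; ext i
      refine Fin.cases ?_ (fun j => ?_) i
      · simp [rad_one_left ht.1 ht.2]
      · simp [← rad_double]
    have cB : Set.EqOn (fun t => B (2 * t - 1)) (fun t => F (fun i : Fin (n+1) => rademacher (i + 1) t))
        (Set.Ioo (1 / 2) 1) := by
      intro t ht
      simp only [hBd]
      congr 1; ext i
      refine Fin.cases ?_ (fun j => ?_) i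
      · simp [rad_one_right ht.1 ht.2]
      · simp [← rad_double']
    have iA : IntervalIntegrable (fun t => A (2 * t)) volume 0 (1 / 2) := by
      have := hA.1.comp_mul_left (c := 2)
      simpa using this
    have iB : IntervalIntegrable (fun t => B (2 * t - 1)) volume (1 / 2) 1 := by
      have := ((hB.1.comp_sub_right 1).comp_mul_left (c := 2))
      norm_num at this
      simpa using this
    have iA' := iA.congr_uIoo (by rw [Set.uIoo_of_le (by norm_num)]; exact cA)
    have iB' := iB.congr_uIoo (by rw [Set.uIoo_of_le (by norm_num)]; exact cB)
    refine ⟨iA'.trans iB', ?_⟩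
    rw [← intervalIntegral.integral_add_adjacent_intervals iA' iB',
      ← intervalIntegral.integral_congr_Ioo_of_le (by norm_num) cA,
      ← intervalIntegral.integral_congr_Ioo_of_le (by norm_num) cB,
      Ex_succ]
    have jA : ∫ t in (0:ℝ)..(1/2), A (2 * t) = (1 / 2) * ∫ t in (0:ℝ)..1, A t := by
      rw [intervalIntegral.integral_comp_mul_left _ (by norm_num)]; simp
    have jB : ∫ t in (1/2:ℝ)..1, B (2 * t - 1) = (1 / 2) * ∫ t in (0:ℝ)..1, B t := by
      rw [intervalIntegral.integral_comp_mul_sub _ (by norm_num)]; norm_num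
    rw [jA, jB, hA.2, hB.2]
    have kk : ∀ (b : Bool) (x : Fin n → Bool), (fun i => sg ((Fin.cons b x : Fin (n+1) → Bool) i)) =
        (Fin.cons (sg b) (fun i => sg (x i)) : Fin (n+1) → ℝ) := by
      intro b x; ext i
      refine Fin.cases ?_ (fun j => ?_) i <;> simp
    simp only [kk]
    simp only [sg]
    simp only [if_true, Bool.false_eq_true, if_false]
    ring

lemma rad_abs_le (k : ℕ) (t : ℝ) : |rademacher k t| ≤ 1 := by
  unfold rademacher
  rcases Real.sign_apply_eq (Real.sin (2 ^ k * Real.pi * t)) with h | h | h <;> rw [h] <;> simp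

open MeasureTheory in
lemma khin_tendsto (c : ℕ → ℝ) (hc : Summable fun n => |c n|) :
    Tendsto (fun N => Ex (fun x : Fin N → Bool => |∑ i : Fin N, c i * sg (x i)|)) atTop
      (𝓝 (∫ t in (0:ℝ)..1, |∑' n, c n * rademacher (n + 1) t|)) := by
  have h : ∀ N, Ex (fun x : Fin N → Bool => |∑ i : Fin N, c i * sg (x i)|) =
      ∫ t in (0:ℝ)..1, |∑ n ∈ Finset.range N, c n * rademacher (n + 1) t| := by
    intro N
    have := (rad_integral (n := N) (fun y => |∑ i : Fin N, c i * y i|)).2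
    rw [← this]
    congr 1; ext t
    rw [← Fin.sum_univ_eq_sum_range (fun n => c n * rademacher (n + 1) t)]
  simp only [h]
  have hb : ∀ t n, ‖c n * rademacher (n + 1) t‖ ≤ |c n| := by
    intro t n
    rw [norm_mul, Real.norm_eq_abs, Real.norm_eq_abs]
    exact mul_le_of_le_one_right (abs_nonneg _) (rad_abs_le _ _)
  apply intervalIntegral.tendsto_integral_filter_of_dominated_convergence
    (fun _ => ∑' n, |c n|)
  · refine Eventually.of_forall (fun N => ?_)
    have := (rad_integral (n := N) (fun y => |∑ i : Fin N, c i * y i|)).1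
    have := (intervalIntegrable_iff.1 this).aestronglyMeasurable
    refine this.congr (Eventually.of_forall fun t => ?_)
    simp only
    rw [← Fin.sum_univ_eq_sum_range (fun n => c n * rademacher (n + 1) t)]
  · refine Eventually.of_forall (fun N => Eventually.of_forall fun t _ => ?_)
    rw [Real.norm_eq_abs, abs_abs]
    calc _ ≤ ∑ n ∈ Finset.range N, |c n * rademacher (n + 1) t| := Finset.abs_sum_le_sum_abs _ _
      _ ≤ ∑ n ∈ Finset.range N, |c n| := Finset.sum_le_sum fun n _ => hb t n
      _ ≤ _ := hc.sum_le_tsum _ (fun n _ => abs_nonneg _)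
  · simp
  · refine Eventually.of_forall fun t _ => ?_
    have : Summable fun n => c n * rademacher (n + 1) t := Summable.of_norm_bounded hc (hb t)
    exact this.hasSum.tendsto_sum_nat.abs

lemma sq_summable (c : ℕ → ℝ) (hc : Summable fun n => |c n|) : Summable fun n => c n ^ 2 := by
  have := hc.tendsto_atTop_zero
  refine Summable.of_norm_bounded_eventually_nat hc ?_
  filter_upwards [this.eventually (gt_mem_nhds one_pos)] with n hn
  rw [norm_pow, Real.norm_eq_abs]
  nlinarith [abs_nonneg (c n)]

lemma khin (c : ℕ → ℝ) (hc : Summable fun n => |c n|) :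
    ∑' n, c n ^ 2 ≤ 2 * (∫ t in (0:ℝ)..1, |∑' n, c n * rademacher (n + 1) t|) ^ 2 ∧
    (∫ t in (0:ℝ)..1, |∑' n, c n * rademacher (n + 1) t|) ^ 2 ≤ ∑' n, c n ^ 2 := by
  have h1 := (khin_tendsto c hc).pow 2
  have h2 := (sq_summable c hc).hasSum.tendsto_sum_nat
  constructor
  · refine le_of_tendsto_of_tendsto' h2 (h1.const_mul 2) (fun N => ?_)
    rw [← Fin.sum_univ_eq_sum_range (fun n => c n ^ 2)]
    exact szarek _
  · refine le_of_tendsto_of_tendsto' h1 h2 (fun N => ?_)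
    rw [← Fin.sum_univ_eq_sum_range (fun n => c n ^ 2)]
    exact khin_upper _

lemma key_upper_inf (α : ℕ → ℝ) (hα : Summable fun n => |α n|) (ξ : ℕ → ℝ) (hξ : ∀ n, |ξ n| ≤ 1) :
    (Summable fun n => |ξ n * α n|) ∧ ∑' n, (ξ n * α n) ^ 2 ≤ ∑' n, |α n| ^ (2 : ℝ) := by
  have hs : Summable fun n => |ξ n * α n| := by
    refine Summable.of_nonneg_of_le (fun n => abs_nonneg _) (fun n => ?_) hα
    rw [abs_mul]; exact mul_le_of_le_one_left (abs_nonneg _) (hξ n)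
  refine ⟨hs, ?_⟩
  have h2 : (fun n => |α n| ^ (2 : ℝ)) = fun n => α n ^ 2 := by ext n; simp
  rw [h2]
  refine (sq_summable _ hs).tsum_le_tsum (fun n => ?_) (sq_summable _ hα)
  rw [mul_pow]
  refine mul_le_of_le_one_left (sq_nonneg _) ?_
  rw [sq_le_one_iff_abs_le_one]; exact hξ n

lemma key_upper_fin (p q r : ℝ) (hpq : p.HolderConjugate q) (hrq : r.HolderTriple q 2)
    (α : ℕ → ℝ) (hα : Summable fun n => |α n| ^ p) (hαr : Summable fun n => |α n| ^ r)
    (ξ : ℕ → ℝ) (hξ : Summable fun n => |ξ n| ^ q) (hξ1 : ∑' n, |ξ n| ^ q ≤ 1) :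
    (Summable fun n => |ξ n * α n|) ∧
      ∑' n, (ξ n * α n) ^ 2 ≤ ((∑' n, |α n| ^ r) ^ (1 / r)) ^ 2 := by
  constructor
  · have := Real.summable_mul_of_Lp_Lq_of_nonneg hpq (fun n => abs_nonneg (α n))
      (fun n => abs_nonneg (ξ n)) hα hξ
    simpa only [abs_mul, mul_comm] using this
  · have := Real.Lr_rpow_le_Lp_mul_Lq_tsum_of_nonneg hrq (fun n => abs_nonneg (α n))
      (fun n => abs_nonneg (ξ n)) hαr hξ
    have e : (fun n => (|α n| * |ξ n|) ^ (2 : ℝ)) = fun n => (ξ n * α n) ^ 2 := by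
      ext n; rw [mul_comm]; simp [mul_pow]
    rw [e] at this
    refine this.trans ?_
    have h0 : 0 ≤ ∑' n, |α n| ^ r := tsum_nonneg fun n => by positivity
    have h1 : 0 ≤ ∑' n, |ξ n| ^ q := tsum_nonneg fun n => by positivity
    have hq0 := hrq.right_pos
    rw [← Real.rpow_natCast, ← Real.rpow_mul h0]
    have e2 : 1 / r * ((2 : ℕ) : ℝ) = 2 / r := by push_cast; ring
    rw [e2]
    exact mul_le_of_le_one_right (by positivity) (Real.rpow_le_one h1 hξ1 (by positivity))

lemma key_lower_fin (q r : ℝ) (hrq : r.HolderTriple q 2)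
    (α : ℕ → ℝ) (hαr : Summable fun n => |α n| ^ r) (hA : 0 < ∑' n, |α n| ^ r) :
    ∃ ξ : ℕ → ℝ, (Summable fun n => |ξ n| ^ q) ∧ ∑' n, |ξ n| ^ q ≤ 1 ∧
      ((∑' n, |α n| ^ r) ^ (1 / r)) ^ 2 ≤ ∑' n, (ξ n * α n) ^ 2 := by
  have hq0 := hrq.right_pos
  have hr0 := hrq.left_pos
  have hh := hrq.inv_add_inv_eq_inv
  set A := ∑' n, |α n| ^ r with hAd
  have e1 : ∀ n, |(|α n| ^ (r / q) / A ^ (1 / q))| ^ q = |α n| ^ r / A := by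
    intro n
    rw [abs_of_nonneg (by positivity), Real.div_rpow (by positivity) (by positivity),
      ← Real.rpow_mul (abs_nonneg _), ← Real.rpow_mul hA.le]
    rw [div_mul_cancel₀ _ hq0.ne', div_mul_cancel₀ _ hq0.ne', Real.rpow_one]
  have ex : r / q * 2 + 2 = r := by
    field_simp at hh ⊢; nlinarith
  have e2 : ∀ n, (|α n| ^ (r / q) / A ^ (1 / q) * α n) ^ 2 = |α n| ^ r / A ^ (2 / q) := by
    intro n
    rw [mul_pow, div_pow, ← sq_abs (α n), ← Real.rpow_natCast, ← Real.rpow_natCast,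
      ← Real.rpow_natCast, ← Real.rpow_mul (abs_nonneg _), ← Real.rpow_mul hA.le, div_mul_eq_mul_div,
      ← Real.rpow_add_of_nonneg (abs_nonneg _) (by positivity) (by positivity)]
    push_cast
    rw [ex]; congr 2; ring
  refine ⟨fun n => |α n| ^ (r / q) / A ^ (1 / q), ?_, ?_, ?_⟩
  · simp only [e1]; exact hαr.div_const _
  · simp only [e1]; rw [tsum_div_const, ← hAd, div_self hA.ne']
  · simp only [e2]; rw [tsum_div_const, ← hAd, ← Real.rpow_natCast, ← Real.rpow_mul hA.le]
    apply le_of_eq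
    rw [eq_div_iff (by positivity), ← Real.rpow_add hA]
    have : 1 / r * ((2 : ℕ) : ℝ) + 2 / q = 1 := by
      push_cast
      have : 1 / r * 2 + 2 / q = 2 * (r⁻¹ + q⁻¹) := by ring
      rw [this, hh]; norm_num
    rw [this, Real.rpow_one]

lemma key (p : ℝ) (q : ℝ≥0∞) (r : ℝ) (hp1 : 1 ≤ p) (hp2 : p < 2)
    (hq : (ENNReal.ofReal p)⁻¹ + q⁻¹ = 1) (hr : 1 / p = 1 / 2 + 1 / r)
    (α : ℕ → ℝ) (hα : Summable fun n => |α n| ^ p) :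
    (∀ ξ : lp (fun _ : ℕ => ℝ) q, ‖ξ‖ ≤ 1 → (Summable fun n => |ξ n * α n|) ∧
      ∑' n, (ξ n * α n) ^ 2 ≤ ((∑' n, |α n| ^ r) ^ (1 / r)) ^ 2) ∧
    ∃ ξ : lp (fun _ : ℕ => ℝ) q, ‖ξ‖ ≤ 1 ∧
      ((∑' n, |α n| ^ r) ^ (1 / r)) ^ 2 ≤ ∑' n, (ξ n * α n) ^ 2 := by
  have hp0 : 0 < p := by linarith
  rcases eq_or_lt_of_le hp1 with rfl | hp1'
  · have hr2 : r = 2 := by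
      have : 1 / r = 1 / 2 := by linarith
      simpa using this
    subst hr2
    have hq' : q = ∞ := by
      have : (1 : ℝ≥0∞) + q⁻¹ = 1 + 0 := by simpa using hq
      have := (ENNReal.add_right_inj ENNReal.one_ne_top).1 this
      simpa using this
    subst hq'
    have hα1 : Summable fun n => |α n| := by simpa using hα
    have e : ((∑' n, |α n| ^ (2 : ℝ)) ^ (1 / (2 : ℝ))) ^ 2 = ∑' n, |α n| ^ (2 : ℝ) := by
      rw [← Real.sqrt_eq_rpow, Real.sq_sqrt (tsum_nonneg fun n => by positivity)]
    rw [e]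
    constructor
    · intro ξ hξ
      refine key_upper_inf α hα1 ξ (fun n => ?_)
      exact (lp.norm_apply_le_norm (by simp) ξ n).trans hξ
    · have hm : Memℓp (fun _ : ℕ => (1 : ℝ)) ∞ := memℓp_infty ⟨1, by rintro _ ⟨i, rfl⟩; simp⟩
      refine ⟨⟨fun _ => 1, hm⟩, ?_, ?_⟩
      · refine lp.norm_le_of_forall_le zero_le_one (fun i => ?_)
        simp
      · simp
  · have hqt : q ≠ ∞ := by
      rintro rfl
      simp only [ENNReal.inv_top, add_zero, ENNReal.inv_eq_one, ENNReal.ofReal_eq_one] at hq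
      linarith
    have hq0 : q ≠ 0 := by rintro rfl; simp at hq
    have hqp : 0 < q.toReal := ENNReal.toReal_pos hq0 hqt
    have hqr : p⁻¹ + q.toReal⁻¹ = 1 := by
      have := congrArg ENNReal.toReal hq
      rwa [ENNReal.toReal_add (by simp [hp0]) (by simp [hq0]), ENNReal.toReal_inv,
        ENNReal.toReal_inv, ENNReal.toReal_ofReal hp0.le, ENNReal.toReal_one] at this
    have hpq : p.HolderConjugate q.toReal := Real.holderConjugate_iff.2 ⟨hp1', hqr⟩
    simp only [one_div] at hr
    have hpi : (2 : ℝ)⁻¹ < p⁻¹ := by gcongr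
    have hr0 : 0 < r := by
      have : 0 < r⁻¹ := by linarith
      exact inv_pos.1 this
    have hrq : r.HolderTriple q.toReal 2 := ⟨by linarith, hr0, hqp⟩
    have hpr : p ≤ r := by
      have h1 : p⁻¹ ≤ 1 := inv_le_one_of_one_le₀ hp1
      have : r⁻¹ ≤ p⁻¹ := by linarith [show (0:ℝ) < 2⁻¹ by norm_num]
      exact (inv_le_inv₀ hr0 hp0).1 this
    have hαr : Summable fun n => |α n| ^ r := by
      refine Summable.of_norm_bounded_eventually_nat hα ?_
      filter_upwards [hα.tendsto_atTop_zero.eventually (gt_mem_nhds one_pos)] with n hn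
      rw [Real.norm_of_nonneg (by positivity)]
      have h1 : |α n| ≤ 1 := by
        by_contra hc
        push Not at hc
        exact absurd hn (not_lt.2 (Real.one_le_rpow hc.le hp0.le))
      exact Real.rpow_le_rpow_of_exponent_ge_of_imp (abs_nonneg _) h1 hpr (fun _ h => by linarith)
    constructor
    · intro ξ hξ
      have hs : Summable fun n => |ξ n| ^ q.toReal := (lp.memℓp ξ).summable hqp
      refine key_upper_fin p q.toReal r hpq hrq α hα hαr ξ hs ?_
      have := lp.norm_rpow_eq_tsum hqp ξ
      simp only [Real.norm_eq_abs] at this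
      rw [← this]
      exact Real.rpow_le_one (lp.norm_nonneg' _) hξ hqp.le
    · rcases (tsum_nonneg (fun n => by positivity) : 0 ≤ ∑' n, |α n| ^ r).eq_or_lt with h0 | h0
      · refine ⟨0, by simp, ?_⟩
        rw [← h0, Real.zero_rpow (by positivity)]
        simp
      · obtain ⟨ξ, h1, h2, h3⟩ := key_lower_fin q.toReal r hrq α hαr h0
        have hm : Memℓp ξ q := memℓp_gen h1
        refine ⟨⟨ξ, hm⟩, ?_, h3⟩
        refine lp.norm_le_of_tsum_le hqp zero_le_one ?_
        rw [Real.one_rpow]; exact h2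

theorem stmt14 (p : ℝ) (q : ℝ≥0∞) (r : ℝ) (hp1 : 1 ≤ p) (hp2 : p < 2)
    (hq : (ENNReal.ofReal p)⁻¹ + q⁻¹ = 1) (hr : 1 / p = 1 / 2 + 1 / r)
    (α : ℕ → ℝ) (hα : Summable fun n => |α n| ^ p) :
    (Real.sqrt 2)⁻¹ * (∑' n, |α n| ^ r) ^ (1 / r) ≤
      sSup {s : ℝ | ∃ ξ : lp (fun _ : ℕ => ℝ) q, ‖ξ‖ ≤ 1 ∧
        s = ∫ t in (0:ℝ)..1, |∑' n, ξ n * α n * rademacher (n + 1) t|} ∧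
    sSup {s : ℝ | ∃ ξ : lp (fun _ : ℕ => ℝ) q, ‖ξ‖ ≤ 1 ∧
        s = ∫ t in (0:ℝ)..1, |∑' n, ξ n * α n * rademacher (n + 1) t|} ≤
      (∑' n, |α n| ^ r) ^ (1 / r) := by
  obtain ⟨hU, ξ₀, hξ₀, hL⟩ := key p q r hp1 hp2 hq hr α hα
  set N := (∑' n, |α n| ^ r) ^ (1 / r) with hN
  have hN0 : 0 ≤ N := by
    have : 0 ≤ ∑' n, |α n| ^ r := tsum_nonneg fun n => by positivity
    positivity
  have hub : ∀ s ∈ {s : ℝ | ∃ ξ : lp (fun _ : ℕ => ℝ) q, ‖ξ‖ ≤ 1 ∧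
        s = ∫ t in (0:ℝ)..1, |∑' n, ξ n * α n * rademacher (n + 1) t|}, s ≤ N := by
    rintro s ⟨ξ, hξ, rfl⟩
    obtain ⟨h1, h2⟩ := hU ξ hξ
    exact le_of_sq_le_sq ((khin _ h1).2.trans h2) hN0
  refine ⟨?_, csSup_le ⟨_, ξ₀, hξ₀, rfl⟩ hub⟩
  refine le_trans ?_ (le_csSup ⟨N, hub⟩ ⟨ξ₀, hξ₀, rfl⟩)
  have h := hL.trans (khin _ (hU ξ₀ hξ₀).1).1
  have hI : 0 ≤ ∫ t in (0:ℝ)..1, |∑' n, ξ₀ n * α n * rademacher (n + 1) t| :=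
    intervalIntegral.integral_nonneg zero_le_one (fun t _ => abs_nonneg _)
  refine le_of_sq_le_sq ?_ hI
  rw [mul_pow, inv_pow, Real.sq_sqrt zero_le_two]
  linarith
end
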